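/- Let (X, p_X) be a binary memoryless source, β ∈ (0, 1/2), N = 2^n, δ_N = 2^{−N^β}, G_N the n-fold Kronecker power of [[1,0],[1,1]] over F₂, A^N = X^N G_N, V_X = {i : H(A_i | A^{i−1}) > 1 − δ_N}, and H_X = {i : H(A_i | A^{i−1}) > δ_N}. Then: (1) lim_{N→∞} |H_X| / N = H(X); (2) lim_{N→∞} |V_X| / N = H(X); (3) lim_{N→∞} |H_X \ V_X| / N = 0. -/

import Mathlib

open Finset Filter Real

attribute [local instance] Classical.propDecidable

noncomputable section

/-- `p` is a probability mass function on the finite type `α`. -/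
def IsPMF {α : Type*} [Fintype α] (p : α → ℝ) : Prop :=
  (∀ a, 0 ≤ p a) ∧ ∑ a, p a = 1

/-- i.i.d. (product) distribution of `n` copies of a source with pmf `p`. -/
def iid {α : Type*} [Fintype α] (p : α → ℝ) (n : ℕ) : (Fin n → α) → ℝ :=
  fun x => ∏ i, p (x i)

/-- variational distance between two pmfs -/
def VD {α : Type*} [Fintype α] (p q : α → ℝ) : ℝ := ∑ a, |p a - q a|

/-- Shannon entropy, base 2 -/
def Hsh {α : Type*} [Fintype α] (p : α → ℝ) : ℝ := - ∑ a, p a * Real.logb 2 (p a)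

/-- Rényi entropy of order 2, base 2 -/
def H2 {α : Type*} [Fintype α] (p : α → ℝ) : ℝ := - Real.logb 2 (∑ a, (p a) ^ 2)

/-- min-entropy, base 2 -/
def Hinf {α : Type*} [Fintype α] (p : α → ℝ) : ℝ := - Real.logb 2 (⨆ a, p a)

/-- Kullback–Leibler divergence, base 2 -/
def KL {α : Type*} [Fintype α] (p q : α → ℝ) : ℝ := ∑ a, p a * Real.logb 2 (p a / q a)

/-- pushforward of a pmf along a map -/
def push {α β : Type*} [Fintype α] [Fintype β] (p : α → ℝ) (f : α → β) : β → ℝ :=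
  fun b => ∑ a, if f a = b then p a else 0

/-- conditional mutual information `I(X;Y|Q)` of a joint pmf on `Q × X × Y`, base 2:
`I(X;Y|Q) = H(Q,X) + H(Q,Y) - H(Q) - H(Q,X,Y)`. -/
def condMI {Q X Y : Type*} [Fintype Q] [Fintype X] [Fintype Y] (p : Q × X × Y → ℝ) : ℝ :=
  Hsh (fun qx : Q × X => ∑ y, p (qx.1, qx.2, y))
    + Hsh (fun qy : Q × Y => ∑ x, p (qy.1, x, qy.2))
    - Hsh (fun q : Q => ∑ x, ∑ y, p (q, x, y))
    - Hsh p

/-- the set of `ε`-letter-typical sequences of length `n` -/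
def typ {α : Type*} [Fintype α] (p : α → ℝ) (n : ℕ) (ε : ℝ) : Finset (Fin n → α) :=
  Finset.univ.filter fun x =>
    ∀ a, |((Finset.univ.filter fun i => x i = a).card : ℝ) / n - p a| ≤ ε * p a

/-- cumulative distribution function of the standard normal distribution -/
def stdΦ (x : ℝ) : ℝ := ∫ t in Set.Iic x, Real.exp (-(t ^ 2) / 2) / Real.sqrt (2 * Real.pi)

/-- `⌈2^r⌉₊`, the size of a message set `{1,…,2^r}` -/
def e2 (r : ℝ) : ℕ := ⌈(2:ℝ) ^ r⌉₊


/-- the polar transform `G_N = [[1,0],[1,1]]^{⊗n}` over `F₂`, `N = 2^n` -/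
def polarG : (n : ℕ) → Matrix (Fin (2 ^ n)) (Fin (2 ^ n)) (ZMod 2)
  | 0 => 1
  | n + 1 =>
    Matrix.reindex (finProdFinEquiv.trans (finCongr (pow_succ 2 n).symm))
                   (finProdFinEquiv.trans (finCongr (pow_succ 2 n).symm))
      (Matrix.kroneckerMap (· * ·) (polarG n) (Matrix.of ![![1, 0], ![1, 1]]))

/-- the distribution of `A^N = X^N G_N` for an i.i.d. source `X` -/
def polarA (pX : ZMod 2 → ℝ) (n : ℕ) : (Fin (2 ^ n) → ZMod 2) → ℝ :=
  push (iid pX (2 ^ n)) (fun x => Matrix.vecMul x (polarG n))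

/-- conditional entropy `H(A_i | A^{i-1})` of the polarized source -/
def polarCondH (pX : ZMod 2 → ℝ) (n : ℕ) (i : Fin (2 ^ n)) : ℝ :=
  Hsh (push (polarA pX n) (fun a => fun j : Fin ((i : ℕ) + 1) => a (Fin.castLE i.isLt j)))
    - Hsh (push (polarA pX n) (fun a => fun j : Fin (i : ℕ) => a (Fin.castLE i.isLt.le j)))

/-- `δ_N = 2^{-N^β}` -/
def polarδ (n : ℕ) (β : ℝ) : ℝ := (2:ℝ) ^ (-(((2:ℝ) ^ n) ^ β))

/-- the very-high-entropy set `V_X` -/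
def polarV (pX : ZMod 2 → ℝ) (β : ℝ) (n : ℕ) : Finset (Fin (2 ^ n)) :=
  Finset.univ.filter fun i => 1 - polarδ n β < polarCondH pX n i

/-- the high-entropy set `H_X` -/
def polarH (pX : ZMod 2 → ℝ) (β : ℝ) (n : ℕ) : Finset (Fin (2 ^ n)) :=
  Finset.univ.filter fun i => polarδ n β < polarCondH pX n i

/-! For a bit with side information write `Z` for its Bhattacharyya parameter and `T` for its mean
bias. One polarization step turns two independent copies into a worse bit, whose `T` is the square
of the old one, and a better bit, whose `Z` is the square of the old one, while the other parameter
at most doubles. As `Z ^ 2 + T ^ 2 ≤ 1`, the mean of `√(Z * T)` over the `2 ^ n` indices decays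
geometrically, so for almost all indices one of `Z` and `T` is already small. From then on, the
parameter that is small gets squared at about half of the steps for almost all indices, by the law
of large numbers for binary digits, and hence falls below `2 ^ (-2 ^ (α * n))` for every
`α < 1 / 2`. A small `Z` makes the conditional entropy close to `0` and a small `T` makes it close
to `1`; the proportion of the latter indices tends to `H(X)`, since by the chain rule the
conditional entropies add up to `2 ^ n * H(X)`. -/

section FiniteLaws

variable {α β γ δ : Type*} [Fintype α] [Fintype β] [Fintype γ] [Fintype δ]

lemma push_eq_sum_filter (p : α → ℝ) (f : α → β) (b : β) :
    push p f b = ∑ a with f a = b, p a :=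
  (sum_filter _ _).symm

lemma push_push (p : α → ℝ) (f : α → β) (g : β → γ) : push (push p f) g = push p (g ∘ f) := by
  funext c
  simp only [push_eq_sum_filter]
  rw [← sum_fiberwise_of_maps_to (s := {a | (g ∘ f) a = c}) (t := {b | g b = c}) (g := f)
    (by simp)]
  refine sum_congr rfl fun b hb => sum_congr ?_ fun _ _ => rfl
  ext a
  simp only [mem_filter, mem_univ, true_and, Function.comp_apply] at hb ⊢
  exact ⟨fun h => ⟨h ▸ hb, h⟩, And.right⟩

lemma isPMF_push {p : α → ℝ} (hp : IsPMF p) (f : α → β) : IsPMF (push p f) := by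
  refine ⟨fun b => sum_nonneg fun a _ => ?_, ?_⟩
  · split_ifs
    exacts [hp.1 a, le_rfl]
  · simp only [push]
    rw [sum_comm]
    simpa using hp.2

lemma push_apply_of_injective (p : α → ℝ) {f : α → β} (hf : Function.Injective f) (a : α) :
    push p f (f a) = p a := by
  simp [push, hf.eq_iff]

lemma push_eq_zero_of_notMem_range (p : α → ℝ) {f : α → β} {b : β} (hb : b ∉ Set.range f) :
    push p f b = 0 :=
  sum_eq_zero fun a _ => if_neg fun h => hb ⟨a, h⟩

lemma sum_push_of_injective (p : α → ℝ) {f : α → β} (hf : Function.Injective f) {φ : ℝ → ℝ}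
    (hφ : φ 0 = 0) : ∑ b, φ (push p f b) = ∑ a, φ (p a) :=
  (Fintype.sum_of_injective f hf _ _
    (fun b hb => by rw [push_eq_zero_of_notMem_range p hb, hφ])
    (fun a => by rw [push_apply_of_injective p hf])).symm

lemma Hsh_push_of_injective (p : α → ℝ) {f : α → β} (hf : Function.Injective f) :
    Hsh (push p f) = Hsh p :=
  congrArg Neg.neg (sum_push_of_injective p hf (φ := fun x => x * logb 2 x) (zero_mul _))

/-- The law of a pair of independent random variables with laws `p` and `q`. -/
def prodLaw (p : α → ℝ) (q : β → ℝ) (x : α × β) : ℝ := p x.1 * q x.2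

lemma prodLaw_push_push (p : α → ℝ) (q : β → ℝ) (f : α → γ) (g : β → δ) :
    prodLaw (push p f) (push q g) = push (prodLaw p q) (Prod.map f g) := by
  funext ⟨c, d⟩
  simp only [prodLaw, push, sum_mul_sum, Fintype.sum_prod_type, Prod.map_apply, Prod.mk.injEq,
    ite_and, mul_ite, ite_mul, mul_zero, zero_mul]
  exact sum_congr rfl fun a _ => sum_congr rfl fun b _ => by split_ifs <;> rfl

lemma Hsh_prodLaw {p : α → ℝ} {q : β → ℝ} (hp : IsPMF p) (hq : IsPMF q) :
    Hsh (prodLaw p q) = Hsh p + Hsh q := by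
  have log_mul : ∀ a b, p a * q b * logb 2 (p a * q b) =
      p a * logb 2 (p a) * q b + p a * (q b * logb 2 (q b)) := fun a b => by
    rcases eq_or_ne (p a) 0 with ha | ha
    · simp [ha]
    rcases eq_or_ne (q b) 0 with hb | hb
    · simp [hb]
    rw [logb_mul ha hb]
    ring
  simp only [Hsh, prodLaw, Fintype.sum_prod_type, log_mul, sum_add_distrib, ← mul_sum, ← sum_mul,
    hp.2, hq.2, mul_one, one_mul, neg_add]

lemma isPMF_iid {p : α → ℝ} (hp : IsPMF p) (n : ℕ) : IsPMF (iid p n) := by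
  refine ⟨fun x => prod_nonneg fun i _ => hp.1 _, ?_⟩
  simp only [iid, ← Fintype.piFinset_univ, ← Finset.prod_univ_sum, hp.2, prod_const_one]

lemma sum_zmod_two (f : ZMod 2 → ℝ) : ∑ b, f b = f 0 + f 1 := Fin.sum_univ_two f

lemma push_fst_apply (q : α × ZMod 2 → ℝ) (y : α) :
    push q Prod.fst y = q (y, 0) + q (y, 1) := by
  simp only [push, Fintype.sum_prod_type]
  rw [sum_eq_single y (fun z _ hz => by simp [hz]) (by simp)]
  simpa only [if_true] using sum_zmod_two fun b => q (y, b)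

end FiniteLaws

section BinaryEntropyBounds

lemma negMulLog_le_two_mul_sqrt_sub {x : ℝ} (hx : 0 ≤ x) : negMulLog x ≤ 2 * (√x - x) := by
  rcases hx.eq_or_lt with rfl | hx
  · simp
  have log_sqrt_ge := one_sub_inv_le_log_of_pos (sqrt_pos.2 hx)
  rw [log_sqrt hx.le] at log_sqrt_ge
  have mul_inv_sqrt : x * (√x)⁻¹ = √x := div_sqrt
  have := mul_le_mul_of_nonneg_left log_sqrt_ge hx.le
  rw [negMulLog]
  linarith

lemma binEntropy_le_two_mul_sqrt {x : ℝ} (h0 : 0 ≤ x) (h1 : x ≤ 1) :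
    binEntropy x ≤ 2 * √(x * (1 - x)) := by
  have h1' : 0 ≤ 1 - x := sub_nonneg.2 h1
  have slack : 0 ≤ (1 - √x) * (1 - √(1 - x)) :=
    mul_nonneg (sub_nonneg.2 (sqrt_le_one.2 h1)) (sub_nonneg.2 (sqrt_le_one.2 (by linarith)))
  calc binEntropy x = negMulLog x + negMulLog (1 - x) :=
        binEntropy_eq_negMulLog_add_negMulLog_one_sub x
    _ ≤ 2 * (√x - x) + 2 * (√(1 - x) - (1 - x)) :=
        add_le_add (negMulLog_le_two_mul_sqrt_sub h0) (negMulLog_le_two_mul_sqrt_sub h1')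
    _ ≤ 2 * (√x * √(1 - x)) := by linarith
    _ = 2 * √(x * (1 - x)) := by rw [sqrt_mul h0]

lemma two_mul_mul_log_two_le_binEntropy {x : ℝ} (h0 : 0 ≤ x) (h1 : x ≤ 2⁻¹) :
    2 * x * log 2 ≤ binEntropy x := by
  have concave := strictConcave_binEntropy.concaveOn.2 (Set.left_mem_Icc.2 zero_le_one)
    (show (2⁻¹ : ℝ) ∈ Set.Icc 0 1 by norm_num) (show 0 ≤ 1 - 2 * x by linarith)
    (show 0 ≤ 2 * x by linarith) (by ring)
  have combination : 2 * x * 2⁻¹ = x := by ring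
  simpa [combination] using concave

lemma log_two_mul_one_sub_abs_le_binEntropy {x : ℝ} (h0 : 0 ≤ x) (h1 : x ≤ 1) :
    log 2 * (1 - |2 * x - 1|) ≤ binEntropy x := by
  rcases le_total x 2⁻¹ with hx | hx
  · rw [abs_of_nonpos (by linarith)]
    linarith [two_mul_mul_log_two_le_binEntropy h0 hx]
  · rw [abs_of_nonneg (by linarith), ← binEntropy_one_sub]
    linarith [two_mul_mul_log_two_le_binEntropy (x := 1 - x) (by linarith) (by linarith)]

end BinaryEntropyBounds

section SideInformation

variable {ι κ : Type*} [Fintype ι] [Fintype κ]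

/-- The conditional entropy `H(B | Y)` of a bit `B` given side information `Y`, where `q` is the
joint law of `(Y, B)`. -/
def condEntropy (q : ι × ZMod 2 → ℝ) : ℝ := Hsh q - Hsh (push q Prod.fst)

/-- The Bhattacharyya parameter `Z(B | Y)` of a bit `B` given side information `Y`, where `q` is
the joint law of `(Y, B)`. It is small when `Y` nearly determines `B`. -/
def bhattacharyya (q : ι × ZMod 2 → ℝ) : ℝ := ∑ y, 2 * √(q (y, 0) * q (y, 1))

/-- The mean bias `∑ y, |P(y, 0) - P(y, 1)|` of a bit `B` given side information `Y`, where `q` is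
the joint law of `(Y, B)`. It is small when `B` is nearly uniform given `Y`. -/
def bias (q : ι × ZMod 2 → ℝ) : ℝ := ∑ y, |q (y, 0) - q (y, 1)|

variable {q : ι × ZMod 2 → ℝ}

lemma sum_add_eq_one (hq : IsPMF q) : ∑ y, (q (y, 0) + q (y, 1)) = 1 := by
  simpa only [Fintype.sum_prod_type, sum_zmod_two] using hq.2

lemma condEntropy_eq_sum (hq : IsPMF q) :
    condEntropy q = ∑ y, (q (y, 0) + q (y, 1)) *
      (binEntropy (q (y, 0) / (q (y, 0) + q (y, 1))) / log 2) := by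
  have chain_rule : ∀ {a b : ℝ}, 0 ≤ a → 0 ≤ b →
      (a + b) * logb 2 (a + b) - (a * logb 2 a + b * logb 2 b) =
        (a + b) * (binEntropy (a / (a + b)) / log 2) := by
    intro a b ha hb
    rcases ha.eq_or_lt with rfl | ha
    · simp
    rcases hb.eq_or_lt with rfl | hb
    · simp [ha.ne']
    have hs : 0 < a + b := by positivity
    have complement : 1 - a / (a + b) = b / (a + b) := by field_simp; ring
    rw [binEntropy, complement, log_inv, log_inv, log_div ha.ne' hs.ne', log_div hb.ne' hs.ne']
    simp only [logb]
    field_simp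
    ring
  simp only [condEntropy, Hsh, push_fst_apply, Fintype.sum_prod_type, sum_zmod_two]
  rw [neg_sub_neg, ← sum_sub_distrib]
  exact sum_congr rfl fun y _ => chain_rule (hq.1 _) (hq.1 _)

lemma div_add_mem_Icc {a b : ℝ} (ha : 0 ≤ a) (hb : 0 ≤ b) : a / (a + b) ∈ Set.Icc (0 : ℝ) 1 :=
  ⟨by positivity, div_le_one_of_le₀ (by linarith) (by positivity)⟩

lemma condEntropy_nonneg (hq : IsPMF q) : 0 ≤ condEntropy q := by
  rw [condEntropy_eq_sum hq]
  refine sum_nonneg fun y _ => ?_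
  have mem := div_add_mem_Icc (hq.1 (y, 0)) (hq.1 (y, 1))
  exact mul_nonneg (add_nonneg (hq.1 _) (hq.1 _))
    (div_nonneg (binEntropy_nonneg mem.1 mem.2) (log_pos one_lt_two).le)

lemma condEntropy_le_one (hq : IsPMF q) : condEntropy q ≤ 1 := by
  rw [condEntropy_eq_sum hq, ← sum_add_eq_one hq]
  refine sum_le_sum fun y _ => mul_le_of_le_one_right (add_nonneg (hq.1 _) (hq.1 _)) ?_
  exact div_le_one_of_le₀ binEntropy_le_log_two (log_pos one_lt_two).le

lemma bhattacharyya_nonneg (q : ι × ZMod 2 → ℝ) : 0 ≤ bhattacharyya q :=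
  sum_nonneg fun _ _ => by positivity

lemma bias_nonneg (q : ι × ZMod 2 → ℝ) : 0 ≤ bias q := sum_nonneg fun _ _ => abs_nonneg _

lemma condEntropy_le_two_mul_bhattacharyya (hq : IsPMF q) :
    condEntropy q ≤ 2 * bhattacharyya q := by
  rw [condEntropy_eq_sum hq, bhattacharyya, mul_sum]
  refine sum_le_sum fun y _ => ?_
  have ha := hq.1 (y, 0)
  have hb := hq.1 (y, 1)
  generalize q (y, 0) = a at ha ⊢
  generalize q (y, 1) = b at hb ⊢
  rcases (add_nonneg ha hb).eq_or_lt with hs | hs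
  · rw [← hs, zero_mul]
    positivity
  have mem := div_add_mem_Icc ha hb
  have sqrt_eq : (a + b) * √(a / (a + b) * (1 - a / (a + b))) = √(a * b) := by
    rw [show a / (a + b) * (1 - a / (a + b)) = a * b / (a + b) ^ 2 by field_simp; ring,
      sqrt_div (by positivity), sqrt_sq hs.le]
    field_simp
  have log_two_ge : 2⁻¹ ≤ log 2 := by linarith [log_two_gt_d9]
  rw [← mul_div_assoc, div_le_iff₀ (log_pos one_lt_two)]
  calc (a + b) * binEntropy (a / (a + b))
      ≤ (a + b) * (2 * √(a / (a + b) * (1 - a / (a + b)))) :=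
        mul_le_mul_of_nonneg_left (binEntropy_le_two_mul_sqrt mem.1 mem.2) hs.le
    _ = 2 * (2 * √(a * b)) * 2⁻¹ := by rw [← sqrt_eq]; ring
    _ ≤ 2 * (2 * √(a * b)) * log 2 := by gcongr

lemma one_sub_condEntropy_le_bias (hq : IsPMF q) : 1 - condEntropy q ≤ bias q := by
  rw [condEntropy_eq_sum hq, ← sum_add_eq_one hq, ← sum_sub_distrib, bias]
  refine sum_le_sum fun y _ => ?_
  have ha := hq.1 (y, 0)
  have hb := hq.1 (y, 1)
  generalize q (y, 0) = a at ha ⊢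
  generalize q (y, 1) = b at hb ⊢
  rcases (add_nonneg ha hb).eq_or_lt with hs | hs
  · rw [← hs, zero_mul, sub_zero]
    exact abs_nonneg _
  have mem := div_add_mem_Icc ha hb
  have abs_eq : (a + b) * |2 * (a / (a + b)) - 1| = |a - b| := by
    rw [← abs_of_pos hs, ← abs_mul, abs_of_pos hs]
    congr 1
    field_simp
    ring
  have entropy_ge : 1 - |2 * (a / (a + b)) - 1| ≤ binEntropy (a / (a + b)) / log 2 := by
    rw [le_div_iff₀ (log_pos one_lt_two), mul_comm]
    exact log_two_mul_one_sub_abs_le_binEntropy mem.1 mem.2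
  have := mul_le_mul_of_nonneg_left entropy_ge hs.le
  linarith

lemma sq_sum_add_sq_sum_le {A B C : ι → ℝ} (hC : ∀ i, 0 ≤ C i)
    (h : ∀ i, A i ^ 2 + B i ^ 2 = C i ^ 2) :
    (∑ i, A i) ^ 2 + (∑ i, B i) ^ 2 ≤ (∑ i, C i) ^ 2 := by
  have norm_sq : ∀ x y : ℝ, ‖(⟨x, y⟩ : ℂ)‖ ^ 2 = x ^ 2 + y ^ 2 := fun x y => by
    rw [Complex.sq_norm, Complex.normSq_mk, sq, sq]
  have norm_eq : ∀ i, ‖(⟨A i, B i⟩ : ℂ)‖ = C i := fun i => by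
    rw [← sq_eq_sq₀ (norm_nonneg _) (hC i), norm_sq, h]
  have sum_eq : ∑ i, (⟨A i, B i⟩ : ℂ) = ⟨∑ i, A i, ∑ i, B i⟩ := by
    apply Complex.ext <;> simp
  calc (∑ i, A i) ^ 2 + (∑ i, B i) ^ 2 = ‖∑ i, (⟨A i, B i⟩ : ℂ)‖ ^ 2 := by rw [sum_eq, norm_sq]
    _ ≤ (∑ i, ‖(⟨A i, B i⟩ : ℂ)‖) ^ 2 := by gcongr; exact norm_sum_le _ _
    _ = (∑ i, C i) ^ 2 := by simp only [norm_eq]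

lemma bhattacharyya_sq_add_bias_sq_le_one (hq : IsPMF q) :
    bhattacharyya q ^ 2 + bias q ^ 2 ≤ 1 := by
  rw [← one_pow 2, ← sum_add_eq_one hq]
  refine sq_sum_add_sq_sum_le (fun y => add_nonneg (hq.1 _) (hq.1 _)) fun y => ?_
  rw [mul_pow, sq_sqrt (mul_nonneg (hq.1 _) (hq.1 _)), sq_abs]
  ring

lemma sum_push_prodMap_id {φ : ℝ → ℝ → ℝ} (hφ : φ 0 0 = 0) {σ : ι → κ}
    (hσ : Function.Injective σ) (q : ι × ZMod 2 → ℝ) :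
    ∑ z, φ (push q (Prod.map σ id) (z, 0)) (push q (Prod.map σ id) (z, 1)) =
      ∑ y, φ (q (y, 0)) (q (y, 1)) := by
  refine (Fintype.sum_of_injective σ hσ _ _ (fun z hz => ?_) fun y => ?_).symm
  · have zero : ∀ b, push q (Prod.map σ id) (z, b) = 0 := fun b =>
      push_eq_zero_of_notMem_range q fun ⟨x, hx⟩ => hz ⟨x.1, congrArg Prod.fst hx⟩
    rw [zero, zero, hφ]
  · have apply_image : ∀ b, push q (Prod.map σ id) (σ y, b) = q (y, b) := fun b =>
      push_apply_of_injective q (hσ.prodMap Function.injective_id) (y, b)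
    rw [apply_image, apply_image]

lemma bhattacharyya_push_prodMap_id {σ : ι → κ} (hσ : Function.Injective σ)
    (q : ι × ZMod 2 → ℝ) : bhattacharyya (push q (Prod.map σ id)) = bhattacharyya q :=
  sum_push_prodMap_id (φ := fun a b => 2 * √(a * b)) (by simp) hσ q

lemma bias_push_prodMap_id {σ : ι → κ} (hσ : Function.Injective σ) (q : ι × ZMod 2 → ℝ) :
    bias (push q (Prod.map σ id)) = bias q :=
  sum_push_prodMap_id (φ := fun a b => |a - b|) (by simp) hσ q

/-- One polarization step: from two independent pairs `(y, x)`, `(y', x')` with law `q`, the law of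
the bit `x + x'` given `(y, y')`. -/
def polarMinus (q : ι × ZMod 2 → ℝ) : (ι × ι) × ZMod 2 → ℝ :=
  push (prodLaw q q) fun w => ((w.1.1, w.2.1), w.1.2 + w.2.2)

/-- One polarization step: from two independent pairs `(y, x)`, `(y', x')` with law `q`, the law of
the bit `x'` given `(y, y', x + x')`. -/
def polarPlus (q : ι × ZMod 2 → ℝ) : ((ι × ι) × ZMod 2) × ZMod 2 → ℝ :=
  push (prodLaw q q) fun w => (((w.1.1, w.2.1), w.1.2 + w.2.2), w.2.2)

lemma polarPlus_apply (q : ι × ZMod 2 → ℝ) (y y' : ι) (b c : ZMod 2) :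
    polarPlus q (((y, y'), b), c) = q (y, b + c) * q (y', c) := by
  have relabel_injective : Function.Injective fun w : (ι × ZMod 2) × (ι × ZMod 2) =>
      (((w.1.1, w.2.1), w.1.2 + w.2.2), w.2.2) := by
    rintro ⟨⟨y, x⟩, y', x'⟩ ⟨⟨z, u⟩, z', u'⟩ h
    simp only [Prod.mk.injEq] at h ⊢
    obtain ⟨⟨⟨rfl, rfl⟩, hsum⟩, rfl⟩ := h
    exact ⟨⟨rfl, add_right_cancel hsum⟩, rfl, rfl⟩
  have image_eq : (((y, y'), b), c) = (((y, y'), b + c + c), c) := by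
    rw [add_assoc, CharTwo.add_self_eq_zero, add_zero]
  rw [image_eq]
  exact push_apply_of_injective (prodLaw q q) relabel_injective ((y, b + c), (y', c))

lemma polarMinus_apply (q : ι × ZMod 2 → ℝ) (y y' : ι) (b : ZMod 2) :
    polarMinus q ((y, y'), b) = q (y, b) * q (y', 0) + q (y, b + 1) * q (y', 1) := by
  have marginal : polarMinus q = push (polarPlus q) Prod.fst := by
    rw [polarPlus, push_push]
    rfl
  rw [marginal, push_fst_apply, polarPlus_apply, polarPlus_apply, add_zero]

lemma sum_sum_mul_add_mul_sub (f s : ι → ℝ) (hs : ∑ y, s y = 1) :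
    ∑ y, ∑ y', (f y * s y' + s y * f y' - f y * f y') = 2 * ∑ y, f y - (∑ y, f y) ^ 2 := by
  simp only [sum_sub_distrib, sum_add_distrib, ← mul_sum, ← sum_mul, hs]
  ring

lemma sqrt_mul_add_mul_le {x y u v : ℝ} (hx : 0 ≤ x) (hy : 0 ≤ y) (hu : 0 ≤ u) (hv : 0 ≤ v) :
    √((x ^ 2 * u ^ 2 + y ^ 2 * v ^ 2) * (y ^ 2 * u ^ 2 + x ^ 2 * v ^ 2)) ≤
      x * y * (u ^ 2 + v ^ 2) + (x ^ 2 + y ^ 2) * (u * v) - 2 * (x * y) * (u * v) := by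
  have rhs_nonneg : 0 ≤ x * y * (u ^ 2 + v ^ 2) + (x - y) ^ 2 * (u * v) := by positivity
  have gap_nonneg : 0 ≤ 2 * (x * y * u * v) * ((x - y) ^ 2 * (u - v) ^ 2) := by positivity
  exact sqrt_le_iff.2 ⟨by linarith, by linarith⟩

lemma two_mul_sqrt_mul_add_mul_le {a b c d : ℝ} (ha : 0 ≤ a) (hb : 0 ≤ b) (hc : 0 ≤ c)
    (hd : 0 ≤ d) :
    2 * √((a * c + b * d) * (b * c + a * d)) ≤
      2 * √(a * b) * (c + d) + (a + b) * (2 * √(c * d)) - 2 * √(a * b) * (2 * √(c * d)) := by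
  have := sqrt_mul_add_mul_le (sqrt_nonneg a) (sqrt_nonneg b) (sqrt_nonneg c) (sqrt_nonneg d)
  rw [sq_sqrt ha, sq_sqrt hb, sq_sqrt hc, sq_sqrt hd, ← sqrt_mul ha, ← sqrt_mul hc] at this
  linarith

lemma abs_sub_add_abs_sub_le {a b c d : ℝ} (ha : 0 ≤ a) (hb : 0 ≤ b) (hc : 0 ≤ c) (hd : 0 ≤ d) :
    |a * c - b * d| + |b * c - a * d| ≤
      |a - b| * (c + d) + (a + b) * |c - d| - |a - b| * |c - d| := by
  have abs_ab_le : |a - b| ≤ a + b := abs_le.2 ⟨by linarith, by linarith⟩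
  have abs_cd_le : |c - d| ≤ c + d := abs_le.2 ⟨by linarith, by linarith⟩
  have abs_add_abs_eq_max : ∀ x y : ℝ, |x| + |y| = max |x - y| |x + y| := by
    intro x y
    rcases abs_cases x with hx | hx <;> rcases abs_cases y with hy | hy <;>
      rcases abs_cases (x - y) with h | h <;> rcases abs_cases (x + y) with h' | h' <;>
      rcases max_cases |x - y| |x + y| with hm | hm <;> linarith
  have abs_sub_eq : |(a * c - b * d) - (b * c - a * d)| = |a - b| * (c + d) := by
    rw [← abs_of_nonneg (add_nonneg hc hd), ← abs_mul]
    ring_nf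
  have abs_add_eq : |(a * c - b * d) + (b * c - a * d)| = (a + b) * |c - d| := by
    rw [← abs_of_nonneg (add_nonneg ha hb), ← abs_mul]
    ring_nf
  rw [abs_add_abs_eq_max, abs_sub_eq, abs_add_eq]
  refine max_le ?_ ?_
  · linarith [mul_le_mul_of_nonneg_right abs_ab_le (abs_nonneg (c - d))]
  · linarith [mul_le_mul_of_nonneg_left abs_cd_le (abs_nonneg (a - b))]

lemma bhattacharyya_polarMinus_le (hq : IsPMF q) :
    bhattacharyya (polarMinus q) ≤ 2 * bhattacharyya q - bhattacharyya q ^ 2 := by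
  rw [bhattacharyya, bhattacharyya, ← sum_sum_mul_add_mul_sub _ _ (sum_add_eq_one hq),
    Fintype.sum_prod_type]
  refine sum_le_sum fun y _ => sum_le_sum fun y' _ => ?_
  simp only [polarMinus_apply, zero_add, CharTwo.add_self_eq_zero]
  exact two_mul_sqrt_mul_add_mul_le (hq.1 _) (hq.1 _) (hq.1 _) (hq.1 _)

lemma bhattacharyya_polarPlus (hq : IsPMF q) :
    bhattacharyya (polarPlus q) = bhattacharyya q ^ 2 := by
  simp only [bhattacharyya, Fintype.sum_prod_type, sum_zmod_two, sq, sum_mul_sum,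
    polarPlus_apply, zero_add, add_zero, CharTwo.add_self_eq_zero]
  refine sum_congr rfl fun y _ => sum_congr rfl fun y' _ => ?_
  rw [mul_mul_mul_comm (q (y, 0)), mul_mul_mul_comm (q (y, 1)), mul_comm (q (y, 1)) (q (y, 0)),
    sqrt_mul (mul_nonneg (hq.1 _) (hq.1 _))]
  ring

lemma bias_polarMinus (q : ι × ZMod 2 → ℝ) : bias (polarMinus q) = bias q ^ 2 := by
  simp only [bias, Fintype.sum_prod_type, sq, sum_mul_sum, ← abs_mul, polarMinus_apply, zero_add,
    CharTwo.add_self_eq_zero]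
  refine sum_congr rfl fun y _ => sum_congr rfl fun y' _ => congrArg abs ?_
  ring

lemma bias_polarPlus_le (hq : IsPMF q) :
    bias (polarPlus q) ≤ 2 * bias q - bias q ^ 2 := by
  rw [bias, bias, ← sum_sum_mul_add_mul_sub _ _ (sum_add_eq_one hq)]
  simp only [Fintype.sum_prod_type, sum_zmod_two]
  refine sum_le_sum fun y _ => sum_le_sum fun y' _ => ?_
  simp only [polarPlus_apply, zero_add, add_zero, CharTwo.add_self_eq_zero]
  exact abs_sub_add_abs_sub_le (hq.1 _) (hq.1 _) (hq.1 _) (hq.1 _)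

end SideInformation

section Interleaving

variable {α : Type*} {N M : ℕ}

/-- Two words of length `N` written alternately: the letters of the first word occupy the even
positions of the resulting word of length `N * 2`, those of the second word the odd positions. -/
def interleave (h : N * 2 = M) : (Fin N → α) × (Fin N → α) ≃ (Fin M → α) :=
  (Equiv.arrowProdEquivProdArrow (Fin N) (fun _ => α) (fun _ => α)).symm.trans <|
    ((Equiv.refl (Fin N)).arrowCongr (finTwoArrowEquiv α).symm).trans <|
      (Equiv.curry (Fin N) (Fin 2) α).symm.trans <|
        (finProdFinEquiv.trans (finCongr h)).arrowCongr (Equiv.refl α)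

lemma interleave_apply_zero (h : N * 2 = M) (w : (Fin N → α) × (Fin N → α)) (j : Fin N) :
    interleave h w (finCongr h (finProdFinEquiv (j, 0))) = w.1 j := by
  simp [interleave, Equiv.arrowCongr]

lemma interleave_apply_one (h : N * 2 = M) (w : (Fin N → α) × (Fin N → α)) (j : Fin N) :
    interleave h w (finCongr h (finProdFinEquiv (j, 1))) = w.2 j := by
  simp [interleave, Equiv.arrowCongr]

lemma iid_eq_push_interleave [Fintype α] (p : α → ℝ) (h : N * 2 = M) :
    iid p M = push (prodLaw (iid p N) (iid p N)) (interleave h) := by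
  funext x
  obtain ⟨w, rfl⟩ := (interleave h).surjective x
  rw [push_apply_of_injective _ (interleave h).injective]
  simp only [iid, prodLaw]
  rw [← (finProdFinEquiv.trans (finCongr h)).prod_comp, Fintype.prod_prod_type,
    ← prod_mul_distrib]
  refine prod_congr rfl fun j _ => ?_
  simp only [Fin.prod_univ_two, Equiv.trans_apply, interleave_apply_zero, interleave_apply_one]

/-- The word `(w₀ + u₀, u₀, w₁ + u₁, u₁, …)` obtained from `(w, u)`: the last step of the recursive
computation of the polar transform. -/
def polarCombine [Add α] (h : N * 2 = M) (w : (Fin N → α) × (Fin N → α)) : Fin M → α :=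
  interleave h (w.1 + w.2, w.2)

lemma polarCombine_injective [Add α] [IsRightCancelAdd α] (h : N * 2 = M) :
    Function.Injective (polarCombine (α := α) h) := by
  rintro ⟨w, u⟩ ⟨w', u'⟩ heq
  obtain ⟨hadd, hu⟩ := Prod.mk.injEq _ _ _ _ ▸ (interleave h).injective heq
  obtain rfl : u = u' := hu
  exact congrArg (·, u) (add_right_cancel hadd)

/-- The word `a`, continued by zeros. -/
def padZero [Zero α] (a : Fin N → α) (j : ℕ) : α := if h : j < N then a ⟨j, h⟩ else 0

/-- The first `k` letters of the word `a`, continued by zeros when `a` is shorter than `k`. -/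
def padPrefix [Zero α] (k : ℕ) (a : Fin N → α) (j : Fin k) : α := padZero a j

lemma padZero_val [Zero α] (a : Fin N → α) (j : Fin N) : padZero a j = a j := by
  simp [padZero]

lemma padZero_padPrefix [Zero α] (a : Fin N → α) {j k : ℕ} (hj : j < k) :
    padZero (padPrefix k a) j = padZero a j :=
  padZero_val (padPrefix k a) ⟨j, hj⟩

lemma padPrefix_self [Zero α] (a : Fin N → α) : padPrefix N a = a :=
  funext fun j => padZero_val a j

lemma padPrefix_succ [Zero α] (k : ℕ) (a : Fin N → α) :
    padPrefix (k + 1) a = Fin.snoc (α := fun _ => α) (padPrefix k a) (padZero a k) := by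
  funext j
  induction j using Fin.lastCases with
  | last => simp [padPrefix]
  | cast j => simp [padPrefix]

lemma padZero_polarCombine_even [AddMonoid α] (h : N * 2 = M) (a b : Fin N → α) (k : ℕ) :
    padZero (polarCombine h (a, b)) (k * 2) = padZero a k + padZero b k := by
  by_cases hk : k < N
  · have index_eq : (finCongr h (finProdFinEquiv (⟨k, hk⟩, 0)) : ℕ) = k * 2 := by
      simp [mul_comm]
    rw [← index_eq, padZero_val, polarCombine, interleave_apply_zero, padZero, padZero, dif_pos hk,
      dif_pos hk]
    rfl
  · rw [padZero, padZero, padZero, dif_neg hk, dif_neg hk, dif_neg (by omega), add_zero]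

lemma padZero_polarCombine_odd [AddMonoid α] (h : N * 2 = M) (a b : Fin N → α) (k : ℕ) :
    padZero (polarCombine h (a, b)) (k * 2 + 1) = padZero b k := by
  by_cases hk : k < N
  · have index_eq : (finCongr h (finProdFinEquiv (⟨k, hk⟩, 1)) : ℕ) = k * 2 + 1 := by
      simp [mul_comm, add_comm]
    rw [← index_eq, padZero_val, polarCombine, interleave_apply_one, padZero, dif_pos hk]
  · rw [padZero, padZero, dif_neg hk, dif_neg (by omega)]

lemma padPrefix_polarCombine [AddMonoid α] (h : N * 2 = M) (a b : Fin N → α) (k : ℕ) :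
    padPrefix (k * 2) (polarCombine h (a, b)) =
      polarCombine rfl (padPrefix k a, padPrefix k b) := by
  funext i
  rw [padPrefix, ← padZero_val (polarCombine rfl _) i]
  have hi : (i : ℕ) / 2 < k := by omega
  obtain heven | hodd := Nat.mod_two_eq_zero_or_one i
  · rw [show (i : ℕ) = i / 2 * 2 by omega, padZero_polarCombine_even, padZero_polarCombine_even,
      padZero_padPrefix a hi, padZero_padPrefix b hi]
  · rw [show (i : ℕ) = i / 2 * 2 + 1 by omega, padZero_polarCombine_odd,
      padZero_polarCombine_odd, padZero_padPrefix b hi]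

end Interleaving

section PolarTransform

lemma vecMul_interleave_polarG (n : ℕ) (w : (Fin (2 ^ n) → ZMod 2) × (Fin (2 ^ n) → ZMod 2)) :
    Matrix.vecMul (interleave (pow_succ 2 n).symm w) (polarG (n + 1)) =
      polarCombine (pow_succ 2 n).symm
        (Matrix.vecMul w.1 (polarG n), Matrix.vecMul w.2 (polarG n)) := by
  funext i
  obtain ⟨⟨k, b⟩, rfl⟩ := (finProdFinEquiv.trans (finCongr (pow_succ 2 n).symm)).surjective i
  have kronecker_sum : Matrix.vecMul (interleave (pow_succ 2 n).symm w) (polarG (n + 1))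
      (finCongr (pow_succ 2 n).symm (finProdFinEquiv (k, b))) =
      ∑ j, (w.1 j * (polarG n j k * (!![1, 0; 1, 1] : Matrix (Fin 2) (Fin 2) (ZMod 2)) 0 b) +
        w.2 j * (polarG n j k * (!![1, 0; 1, 1] : Matrix (Fin 2) (Fin 2) (ZMod 2)) 1 b)) := by
    rw [Matrix.vecMul, dotProduct,
      ← (finProdFinEquiv.trans (finCongr (pow_succ 2 n).symm)).sum_comp, Fintype.sum_prod_type]
    refine sum_congr rfl fun j _ => ?_
    rw [Fin.sum_univ_two, Equiv.trans_apply, Equiv.trans_apply, interleave_apply_zero,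
      interleave_apply_one]
    simp [polarG]
  rw [Equiv.trans_apply, kronecker_sum, polarCombine]
  fin_cases b
  · rw [Fin.zero_eta, interleave_apply_zero]
    simp [Matrix.vecMul, dotProduct, sum_add_distrib]
  · rw [Fin.mk_one, interleave_apply_one]
    simp [Matrix.vecMul, dotProduct]

lemma polarA_succ (pX : ZMod 2 → ℝ) (n : ℕ) :
    polarA pX (n + 1) =
      push (prodLaw (polarA pX n) (polarA pX n)) (polarCombine (pow_succ 2 n).symm) := by
  rw [polarA, polarA, iid_eq_push_interleave pX (pow_succ 2 n).symm, prodLaw_push_push,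
    push_push, push_push]
  exact congrArg _ (funext fun w => vecMul_interleave_polarG n w)

variable {pX : ZMod 2 → ℝ}

lemma isPMF_polarA (hX : IsPMF pX) (n : ℕ) : IsPMF (polarA pX n) :=
  isPMF_push (isPMF_iid hX _) _

lemma Hsh_polarA (hX : IsPMF pX) (n : ℕ) : Hsh (polarA pX n) = 2 ^ n * Hsh pX := by
  induction n with
  | zero =>
    have polarA_zero : polarA pX 0 = push pX fun b _ => b := by
      have iid_one : iid pX (2 ^ 0) = push pX fun b _ => b := by
        funext x
        have const_eq : x = fun _ => x 0 :=
          funext fun i => congrArg x (Subsingleton.elim (α := Fin 1) i 0)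
        rw [const_eq, push_apply_of_injective _ fun b c h => congrFun h 0]
        exact Fin.prod_univ_one _
      rw [polarA, iid_one, push_push]
      exact congrArg _ (funext fun b => Matrix.vecMul_one _)
    rw [polarA_zero, Hsh_push_of_injective _ fun b c h => congrFun h 0, pow_zero, one_mul]
  | succ n ih =>
    rw [polarA_succ, Hsh_push_of_injective _ (polarCombine_injective _),
      Hsh_prodLaw (isPMF_polarA hX n) (isPMF_polarA hX n), ih]
    ring

/-- The joint law of the prefix `(A₀, …, A_{k-1})` and the letter `A_k` of the polar transform
`A = X G_N`. All indices `k` are allowed: the word `A` is continued by zeros beyond its length. -/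
def polarLaw (pX : ZMod 2 → ℝ) (n k : ℕ) : (Fin k → ZMod 2) × ZMod 2 → ℝ :=
  push (polarA pX n) fun a => (padPrefix k a, padZero a k)

lemma isPMF_polarLaw (hX : IsPMF pX) (n k : ℕ) : IsPMF (polarLaw pX n k) :=
  isPMF_push (isPMF_polarA hX n) _

lemma polarLaw_even (pX : ZMod 2 → ℝ) (n k : ℕ) :
    polarLaw pX (n + 1) (k * 2) =
      push (polarMinus (polarLaw pX n k)) (Prod.map (polarCombine rfl) id) := by
  simp only [polarLaw, polarMinus, polarA_succ, prodLaw_push_push, push_push]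
  refine congrArg _ (funext fun ⟨a, b⟩ => ?_)
  exact Prod.ext (padPrefix_polarCombine _ a b k) (padZero_polarCombine_even _ a b k)

lemma polarLaw_odd (pX : ZMod 2 → ℝ) (n k : ℕ) :
    polarLaw pX (n + 1) (k * 2 + 1) =
      push (polarPlus (polarLaw pX n k))
        (Prod.map (fun s => Fin.snoc (α := fun _ => ZMod 2) (polarCombine rfl s.1) s.2) id) := by
  simp only [polarLaw, polarPlus, polarA_succ, prodLaw_push_push, push_push]
  refine congrArg _ (funext fun ⟨a, b⟩ => Prod.ext ?_ (padZero_polarCombine_odd _ a b k))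
  simp only [Function.comp_apply, Prod.map_apply]
  rw [padPrefix_succ, padPrefix_polarCombine, padZero_polarCombine_even]

lemma snoc_polarCombine_injective (k : ℕ) :
    Function.Injective fun s : ((Fin k → ZMod 2) × (Fin k → ZMod 2)) × ZMod 2 =>
      Fin.snoc (α := fun _ => ZMod 2) (polarCombine (rfl : k * 2 = k * 2) s.1) s.2 := by
  intro s s' h
  obtain ⟨hinit, hlast⟩ := Fin.snoc_inj.1 h
  exact Prod.ext (polarCombine_injective _ hinit) hlast

lemma bhattacharyya_polarLaw_even_le (hX : IsPMF pX) (n k : ℕ) :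
    bhattacharyya (polarLaw pX (n + 1) (k * 2)) ≤
      2 * bhattacharyya (polarLaw pX n k) - bhattacharyya (polarLaw pX n k) ^ 2 := by
  rw [polarLaw_even, bhattacharyya_push_prodMap_id (polarCombine_injective _)]
  exact bhattacharyya_polarMinus_le (isPMF_polarLaw hX n k)

lemma bhattacharyya_polarLaw_odd (hX : IsPMF pX) (n k : ℕ) :
    bhattacharyya (polarLaw pX (n + 1) (k * 2 + 1)) = bhattacharyya (polarLaw pX n k) ^ 2 := by
  rw [polarLaw_odd, bhattacharyya_push_prodMap_id (snoc_polarCombine_injective k)]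
  exact bhattacharyya_polarPlus (isPMF_polarLaw hX n k)

lemma bias_polarLaw_even (pX : ZMod 2 → ℝ) (n k : ℕ) :
    bias (polarLaw pX (n + 1) (k * 2)) = bias (polarLaw pX n k) ^ 2 := by
  rw [polarLaw_even, bias_push_prodMap_id (polarCombine_injective _), bias_polarMinus]

lemma bias_polarLaw_odd_le (hX : IsPMF pX) (n k : ℕ) :
    bias (polarLaw pX (n + 1) (k * 2 + 1)) ≤
      2 * bias (polarLaw pX n k) - bias (polarLaw pX n k) ^ 2 := by
  rw [polarLaw_odd, bias_push_prodMap_id (snoc_polarCombine_injective k)]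
  exact bias_polarPlus_le (isPMF_polarLaw hX n k)

lemma Hsh_polarLaw (pX : ZMod 2 → ℝ) (n k : ℕ) :
    Hsh (polarLaw pX n k) = Hsh (push (polarA pX n) (padPrefix (k + 1))) := by
  have snoc_injective : Function.Injective fun s : (Fin k → ZMod 2) × ZMod 2 =>
      Fin.snoc (α := fun _ => ZMod 2) s.1 s.2 := fun s s' h =>
    Prod.ext (Fin.snoc_inj.1 h).1 (Fin.snoc_inj.1 h).2
  rw [← Hsh_push_of_injective _ snoc_injective, polarLaw, push_push]
  exact congrArg Hsh (congrArg _ (funext fun a => (padPrefix_succ k a).symm))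

lemma condEntropy_polarLaw (pX : ZMod 2 → ℝ) (n k : ℕ) :
    condEntropy (polarLaw pX n k) =
      Hsh (push (polarA pX n) (padPrefix (k + 1))) - Hsh (push (polarA pX n) (padPrefix k)) := by
  rw [condEntropy, Hsh_polarLaw, polarLaw, push_push]
  rfl

lemma polarCondH_eq_condEntropy (pX : ZMod 2 → ℝ) (n : ℕ) (i : Fin (2 ^ n)) :
    polarCondH pX n i = condEntropy (polarLaw pX n i) := by
  have padPrefix_eq : ∀ {k : ℕ} (hk : k ≤ 2 ^ n),
      padPrefix (α := ZMod 2) k = fun a j => a (Fin.castLE hk j) := fun hk =>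
    funext fun a => funext fun j => padZero_val a (Fin.castLE hk j)
  rw [condEntropy_polarLaw, padPrefix_eq i.isLt, padPrefix_eq i.isLt.le]
  rfl

lemma Hsh_eq_zero_of_unique {α : Type*} [Fintype α] [Unique α] {p : α → ℝ} (hp : IsPMF p) :
    Hsh p = 0 := by
  have apply_default : p default = 1 := by simpa only [Fintype.sum_unique] using hp.2
  rw [Hsh, Fintype.sum_unique, apply_default, logb_one, mul_zero, neg_zero]

lemma sum_condEntropy_polarLaw (hX : IsPMF pX) (n : ℕ) :
    ∑ k ∈ range (2 ^ n), condEntropy (polarLaw pX n k) = 2 ^ n * Hsh pX := by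
  simp only [condEntropy_polarLaw]
  rw [sum_range_sub fun k => Hsh (push (polarA pX n) (padPrefix k)),
    Hsh_eq_zero_of_unique (isPMF_push (isPMF_polarA hX n) (padPrefix 0)), sub_zero,
    Hsh_push_of_injective _ fun a b h => by simpa only [padPrefix_self] using h, Hsh_polarA hX]

end PolarTransform

section DyadicMeans

open scoped BigOperators

lemma sum_range_mul_two {M : Type*} [AddCommMonoid M] (g : ℕ → M) (N : ℕ) :
    ∑ i ∈ range (N * 2), g i = ∑ i ∈ range N, (g (i * 2) + g (i * 2 + 1)) := by
  induction N with
  | zero => simp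
  | succ N ih => rw [sum_range_succ, ← ih, Nat.succ_mul, sum_range_succ, sum_range_succ, add_assoc]

lemma expect_range_two_pow_succ (g : ℕ → ℝ) (n : ℕ) :
    𝔼 i ∈ range (2 ^ (n + 1)), g i = 𝔼 i ∈ range (2 ^ n), (g (i * 2) + g (i * 2 + 1)) / 2 := by
  rw [expect_eq_sum_div_card, expect_eq_sum_div_card, pow_succ, sum_range_mul_two, ← sum_div,
    card_range, card_range, Nat.cast_mul, Nat.cast_two, div_div, mul_comm]

lemma expect_range_two_pow_add (g : ℕ → ℝ) (m r : ℕ) :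
    𝔼 i ∈ range (2 ^ (m + r)), g (i / 2 ^ r) = 𝔼 i ∈ range (2 ^ m), g i := by
  induction r with
  | zero => simp
  | succ r ih =>
    have parent_even : ∀ i, i * 2 / 2 ^ (r + 1) = i / 2 ^ r := fun i => by
      rw [pow_succ', ← Nat.div_div_eq_div_mul, Nat.mul_div_cancel i two_pos]
    have parent_odd : ∀ i, (i * 2 + 1) / 2 ^ (r + 1) = i / 2 ^ r := fun i => by
      rw [pow_succ', ← Nat.div_div_eq_div_mul, show (i * 2 + 1) / 2 = i by omega]
    simp only [← add_assoc, expect_range_two_pow_succ, parent_even, parent_odd, add_self_div_two,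
      ih]

/-- The fraction of the indices `i < 2 ^ n` that satisfy `P`. -/
def dyadicDensity (n : ℕ) (P : ℕ → Prop) : ℝ := 𝔼 i ∈ range (2 ^ n), if P i then 1 else 0

lemma dyadicDensity_nonneg (n : ℕ) (P : ℕ → Prop) : 0 ≤ dyadicDensity n P :=
  expect_nonneg fun i _ => by split_ifs <;> norm_num

lemma dyadicDensity_mono (n : ℕ) {P Q : ℕ → Prop} (h : ∀ i, P i → Q i) :
    dyadicDensity n P ≤ dyadicDensity n Q :=
  expect_le_expect fun i _ => by
    by_cases hP : P i
    · simp [hP, h i hP]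
    · rw [if_neg hP]
      split_ifs <;> norm_num

lemma dyadicDensity_or_le (n : ℕ) (P Q : ℕ → Prop) :
    dyadicDensity n (fun i => P i ∨ Q i) ≤ dyadicDensity n P + dyadicDensity n Q := by
  rw [dyadicDensity, dyadicDensity, dyadicDensity, ← expect_add_distrib]
  refine expect_le_expect fun i _ => ?_
  by_cases hP : P i <;> by_cases hQ : Q i <;> norm_num [hP, hQ]

lemma dyadicDensity_add (m r : ℕ) (P : ℕ → Prop) :
    dyadicDensity (m + r) (fun i => P (i / 2 ^ r)) = dyadicDensity m P :=
  expect_range_two_pow_add (fun i => if P i then 1 else 0) m r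

lemma dyadicDensity_le_expect_div (n : ℕ) {g : ℕ → ℝ} (hg : ∀ i, 0 ≤ g i) {c : ℝ} (hc : 0 < c) :
    dyadicDensity n (fun i => c ≤ g i) ≤ (𝔼 i ∈ range (2 ^ n), g i) / c := by
  rw [expect_div]
  refine expect_le_expect fun i _ => ?_
  split_ifs with h
  · exact (one_le_div hc).2 h
  · exact div_nonneg (hg i) hc.le

/-- The number of the `r` lowest binary digits of `i` that are equal to `b`. -/
def bitCount (b r i : ℕ) : ℕ := #{j ∈ range r | i / 2 ^ j % 2 = b}

lemma bitCount_succ (b r i : ℕ) :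
    bitCount b (r + 1) i = bitCount b r (i / 2) + if i % 2 = b then 1 else 0 := by
  simp only [bitCount, card_filter, sum_range_succ', pow_zero, Nat.div_one, Nat.div_div_eq_div_mul,
    ← pow_succ']

lemma bitCount_zero_add_bitCount_one (r i : ℕ) : bitCount 0 r i + bitCount 1 r i = r := by
  induction r generalizing i with
  | zero => rfl
  | succ r ih =>
    have := ih (i / 2)
    rw [bitCount_succ, bitCount_succ]
    split_ifs <;> omega

lemma expect_sq_two_mul_bitCount_sub (m r : ℕ) :
    𝔼 i ∈ range (2 ^ (m + r)), (2 * (bitCount 1 r i : ℝ) - r) ^ 2 = (r : ℝ) := by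
  induction r with
  | zero => simp [bitCount]
  | succ r ih =>
    have even_child : ∀ i, bitCount 1 (r + 1) (i * 2) = bitCount 1 r i := fun i => by
      rw [bitCount_succ, Nat.mul_div_cancel i two_pos, if_neg (by omega), add_zero]
    have odd_child : ∀ i, bitCount 1 (r + 1) (i * 2 + 1) = bitCount 1 r i + 1 := fun i => by
      rw [bitCount_succ, show (i * 2 + 1) / 2 = i by omega, if_pos (by omega)]
    have children_mean : ∀ x : ℝ, ((2 * x - (r + 1)) ^ 2 + (2 * (x + 1) - (r + 1)) ^ 2) / 2 =
        (2 * x - r) ^ 2 + 1 := fun x => by ring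
    simp only [← add_assoc, expect_range_two_pow_succ, even_child, odd_child, Nat.cast_add_one,
      children_mean, expect_add_distrib, ih]
    rw [expect_const (nonempty_range_iff.2 (pow_pos two_pos _).ne')]

lemma dyadicDensity_le_abs_two_mul_bitCount_sub (m r : ℕ) {s : ℝ} (hs : 0 < s) :
    dyadicDensity (m + r) (fun i => s ≤ |2 * (bitCount 1 r i : ℝ) - r|) ≤ r / s ^ 2 := by
  have le_iff_sq_le : ∀ i, s ≤ |2 * (bitCount 1 r i : ℝ) - r| ↔
      s ^ 2 ≤ (2 * (bitCount 1 r i : ℝ) - r) ^ 2 := fun i => by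
    rw [sq_le_sq, abs_of_pos hs]
  simp only [le_iff_sq_le]
  refine (dyadicDensity_le_expect_div _ (fun i => sq_nonneg _) (by positivity)).trans_eq ?_
  rw [expect_sq_two_mul_bitCount_sub]

lemma lt_bitCount_of_abs_lt {b r i : ℕ} (hb : b < 2) {s : ℝ}
    (h : |2 * (bitCount 1 r i : ℝ) - r| < s) : (r - s) / 2 < bitCount b r i := by
  have total : (bitCount 0 r i : ℝ) + bitCount 1 r i = r :=
    mod_cast bitCount_zero_add_bitCount_one r i
  obtain ⟨hlower, hupper⟩ := abs_lt.1 h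
  interval_cases b <;> linarith

end DyadicMeans

section SquaringProcesses

open scoped BigOperators

/-- A nonnegative quantity on the vertices `(n, i)` of the binary tree in which the parent of
`(n + 1, i)` is `(n, i / 2)`. It at least squares at the children with last binary digit `b`, and
at the other children `1 - f` at least squares. -/
structure IsSquaringProcess (b : ℕ) (f : ℕ → ℕ → ℝ) : Prop where
  nonneg : ∀ n i, 0 ≤ f n i
  le_sq : ∀ n i, i % 2 = b → f (n + 1) i ≤ f n (i / 2) ^ 2
  le_two_mul_sub_sq : ∀ n i, i % 2 ≠ b → f (n + 1) i ≤ 2 * f n (i / 2) - f n (i / 2) ^ 2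

lemma IsSquaringProcess.le_two_rpow_bitCount {b : ℕ} {f : ℕ → ℕ → ℝ} (hf : IsSquaringProcess b f)
    (m : ℕ) {x : ℝ} : ∀ {r i : ℕ}, f m (i / 2 ^ r) ≤ (2 : ℝ) ^ (-x) →
      f (m + r) i ≤ (2 : ℝ) ^ (-((x - r) * 2 ^ bitCount b r i)) := by
  intro r
  induction r with
  | zero => simp [bitCount]
  | succ r ih =>
    intro i h
    rw [pow_succ', ← Nat.div_div_eq_div_mul] at h
    have parent_le := ih h
    have one_le : (1 : ℝ) ≤ 2 ^ bitCount b r (i / 2) := one_le_pow₀ one_le_two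
    rw [← add_assoc, bitCount_succ, Nat.cast_add_one]
    split_ifs with hb
    · calc f (m + r + 1) i ≤ f (m + r) (i / 2) ^ 2 := hf.le_sq _ _ hb
        _ ≤ ((2 : ℝ) ^ (-((x - r) * 2 ^ bitCount b r (i / 2)))) ^ 2 :=
          pow_le_pow_left₀ (hf.nonneg _ _) parent_le 2
        _ = (2 : ℝ) ^ (-((x - r) * 2 ^ bitCount b r (i / 2)) * 2) := by
          rw [← rpow_mul_natCast zero_le_two, Nat.cast_two]
        _ ≤ _ := rpow_le_rpow_of_exponent_le one_le_two (by rw [pow_succ]; linarith)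
    · calc f (m + r + 1) i ≤ 2 * f (m + r) (i / 2) := by
            linarith [hf.le_two_mul_sub_sq (m + r) i hb, sq_nonneg (f (m + r) (i / 2))]
        _ ≤ (2 : ℝ) ^ (-((x - r) * 2 ^ bitCount b r (i / 2))) * 2 := by linarith
        _ = (2 : ℝ) ^ (-((x - r) * 2 ^ bitCount b r (i / 2)) + 1) := by
          rw [rpow_add_one two_ne_zero]
        _ ≤ _ := rpow_le_rpow_of_exponent_le one_le_two (by rw [add_zero]; linarith)

lemma IsSquaringProcess.le_two_rpow_of_le_bitCount {b : ℕ} {f : ℕ → ℕ → ℝ}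
    (hf : IsSquaringProcess b f) {m r i : ℕ} {s c : ℝ} (hs : 0 ≤ s)
    (h : f m (i / 2 ^ r) ≤ (2 : ℝ) ^ (-(r + s))) (hc : c ≤ bitCount b r i) :
    f (m + r) i ≤ (2 : ℝ) ^ (-(s * 2 ^ c)) := by
  refine (hf.le_two_rpow_bitCount m h).trans (rpow_le_rpow_of_exponent_le one_le_two ?_)
  have pow_le : (2 : ℝ) ^ c ≤ 2 ^ bitCount b r i := by
    rw [← rpow_natCast]
    exact rpow_le_rpow_of_exponent_le one_le_two hc
  rw [add_sub_cancel_left]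
  exact neg_le_neg (mul_le_mul_of_nonneg_left pow_le hs)

lemma IsSquaringProcess.two_mul_lt_polarδ {b : ℕ} {f : ℕ → ℕ → ℝ} (hf : IsSquaringProcess b f)
    {m q r i : ℕ} {α β : ℝ} (hβ : 0 ≤ β) (hqr : r + 3 ≤ q * (2 : ℝ) ^ ((q : ℝ) / 4))
    (hr : β * (m + q + r : ℕ) ≤ α * r) (h : f m (i / 2 ^ (q + r)) ≤ (2 : ℝ) ^ (-(q + q : ℝ)))
    (hcq : (q : ℝ) / 4 ≤ bitCount b q (i / 2 ^ r)) (hcr : α * r ≤ bitCount b r i) :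
    2 * f (m + q + r) i < polarδ (m + q + r) β := by
  rw [add_comm q r, pow_add, ← Nat.div_div_eq_div_mul] at h
  have after_q : f (m + q) (i / 2 ^ r) ≤ (2 : ℝ) ^ (-(r + 3 : ℝ)) :=
    (hf.le_two_rpow_of_le_bitCount (Nat.cast_nonneg q) h hcq).trans
      (rpow_le_rpow_of_exponent_le one_le_two (neg_le_neg hqr))
  have after_r : f (m + q + r) i ≤ (2 : ℝ) ^ (-(3 * 2 ^ (α * r)) : ℝ) :=
    hf.le_two_rpow_of_le_bitCount zero_le_three after_q hcr
  have blocklength_le : ((2 : ℝ) ^ (m + q + r)) ^ β ≤ 2 ^ (α * r) := by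
    rw [← rpow_natCast, ← rpow_mul zero_le_two, mul_comm]
    exact rpow_le_rpow_of_exponent_le one_le_two hr
  have one_le : (1 : ℝ) ≤ 2 ^ (α * r) := one_le_rpow one_le_two (le_trans (by positivity) hr)
  calc 2 * f (m + q + r) i ≤ (2 : ℝ) ^ (-(3 * 2 ^ (α * r)) : ℝ) * 2 := by linarith
    _ = (2 : ℝ) ^ (-(3 * 2 ^ (α * r)) + 1 : ℝ) := by rw [rpow_add_one two_ne_zero]
    _ < polarδ (m + q + r) β := rpow_lt_rpow_of_exponent_lt one_lt_two (by linarith)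

lemma IsSquaringProcess.lt_of_polarδ_le {b : ℕ} {f : ℕ → ℕ → ℝ} (hf : IsSquaringProcess b f)
    (hb : b < 2) {m q r i : ℕ} {α β : ℝ} (hβ : 0 ≤ β)
    (hqr : r + 3 ≤ q * (2 : ℝ) ^ ((q : ℝ) / 4)) (hr : β * (m + q + r : ℕ) ≤ α * r)
    (hmiddle : |2 * (bitCount 1 q (i / 2 ^ r) : ℝ) - q| < q / 2)
    (hend : |2 * (bitCount 1 r i : ℝ) - r| < (1 - 2 * α) * r)
    (h : polarδ (m + q + r) β ≤ 2 * f (m + q + r) i) :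
    (2 : ℝ) ^ (-(q + q : ℝ)) < f m (i / 2 ^ (q + r)) := by
  by_contra! hsmall
  refine h.not_gt (hf.two_mul_lt_polarδ hβ hqr hr hsmall ?_ ?_)
  · linarith [lt_bitCount_of_abs_lt hb hmiddle]
  · linarith [lt_bitCount_of_abs_lt hb hend]

/-- Two processes on the binary tree of which each child squares one and at most doubles the other,
such as the Bhattacharyya parameter and the bias along the polar transform. -/
structure IsPolarPair (z t : ℕ → ℕ → ℝ) : Prop where
  left : IsSquaringProcess 1 z
  right : IsSquaringProcess 0 t
  sq_add_sq_le_one : ∀ n i, z n i ^ 2 + t n i ^ 2 ≤ 1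

/-- The constant `31 / 16` has no significance: any constant below `2` will do. -/
lemma sqrt_mul_two_sub_add_le {z t : ℝ} (hz : 0 ≤ z) (ht : 0 ≤ t) (h : z ^ 2 + t ^ 2 ≤ 1) :
    √(z * (2 - t)) + √(t * (2 - z)) ≤ 31 / 16 := by
  have hz1 : z ≤ 1 := by nlinarith
  have ht1 : t ≤ 1 := by nlinarith
  have sum_le : z + t ≤ 3 / 2 := by nlinarith [sq_nonneg (z - t)]
  have prod_le : z * t ≤ 1 / 2 := by nlinarith [sq_nonneg (z - t)]
  have prod_nonneg : 0 ≤ z * t := mul_nonneg hz ht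
  have sq_left := sq_sqrt (show 0 ≤ z * (2 - t) from mul_nonneg hz (by linarith))
  have sq_right := sq_sqrt (show 0 ≤ t * (2 - z) from mul_nonneg ht (by linarith))
  have cross : √(z * (2 - t)) * √(t * (2 - z)) ≤ z * t + (4 - 2 * (z + t) + z * t) / 4 := by
    rw [← sqrt_mul (mul_nonneg hz (by linarith)), sqrt_le_left (by linarith)]
    nlinarith [sq_nonneg (z * t - (4 - 2 * (z + t) + z * t) / 4)]
  refine le_of_sq_le_sq ?_ (by norm_num)
  linarith [add_sq (√(z * (2 - t))) (√(t * (2 - z)))]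

namespace IsPolarPair

variable {z t : ℕ → ℕ → ℝ}

lemma sqrt_children_le (h : IsPolarPair z t) (n i : ℕ) :
    √(z (n + 1) (i * 2) * t (n + 1) (i * 2)) +
      √(z (n + 1) (i * 2 + 1) * t (n + 1) (i * 2 + 1)) ≤ 31 / 16 * √(z n i * t n i) := by
  have hz := h.left.nonneg n i
  have ht := h.right.nonneg n i
  have parent_even : i * 2 / 2 = i := by omega
  have parent_odd : (i * 2 + 1) / 2 = i := by omega
  have even_le : z (n + 1) (i * 2) * t (n + 1) (i * 2) ≤ z n i * t n i * (t n i * (2 - z n i)) := by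
    have z_le := h.left.le_two_mul_sub_sq n (i * 2) (by omega)
    have t_le := h.right.le_sq n (i * 2) (by omega)
    rw [parent_even] at z_le t_le
    calc _ ≤ (2 * z n i - z n i ^ 2) * t n i ^ 2 :=
          mul_le_mul z_le t_le (h.right.nonneg _ _) ((h.left.nonneg _ _).trans z_le)
      _ = _ := by ring
  have odd_le : z (n + 1) (i * 2 + 1) * t (n + 1) (i * 2 + 1) ≤
      z n i * t n i * (z n i * (2 - t n i)) := by
    have z_le := h.left.le_sq n (i * 2 + 1) (by omega)
    have t_le := h.right.le_two_mul_sub_sq n (i * 2 + 1) (by omega)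
    rw [parent_odd] at z_le t_le
    calc _ ≤ z n i ^ 2 * (2 * t n i - t n i ^ 2) :=
          mul_le_mul z_le t_le (h.right.nonneg _ _) (sq_nonneg _)
      _ = _ := by ring
  calc _ ≤ √(z n i * t n i * (t n i * (2 - z n i))) + √(z n i * t n i * (z n i * (2 - t n i))) :=
        add_le_add (sqrt_le_sqrt even_le) (sqrt_le_sqrt odd_le)
    _ = (√(z n i * (2 - t n i)) + √(t n i * (2 - z n i))) * √(z n i * t n i) := by
        rw [sqrt_mul (mul_nonneg hz ht), sqrt_mul (mul_nonneg hz ht)]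
        ring
    _ ≤ 31 / 16 * √(z n i * t n i) := by
        gcongr
        exact sqrt_mul_two_sub_add_le hz ht (h.sq_add_sq_le_one n i)

lemma expect_sqrt_mul_le (h : IsPolarPair z t) (n : ℕ) :
    𝔼 i ∈ range (2 ^ n), √(z n i * t n i) ≤ (31 / 32) ^ n := by
  induction n with
  | zero =>
    simp only [pow_zero, range_one, expect_singleton, sqrt_le_one]
    linarith [h.sq_add_sq_le_one 0 0, two_mul_le_add_sq (z 0 0) (t 0 0),
      mul_nonneg (h.left.nonneg 0 0) (h.right.nonneg 0 0)]
  | succ n ih =>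
    calc _ ≤ 𝔼 i ∈ range (2 ^ n), 31 / 32 * √(z n i * t n i) := by
          rw [expect_range_two_pow_succ]
          exact expect_le_expect fun i _ => by linarith [h.sqrt_children_le n i]
      _ ≤ (31 / 32) ^ (n + 1) := by
          rw [← mul_expect, pow_succ']
          gcongr

lemma dyadicDensity_pow_le_sqrt_mul_le (h : IsPolarPair z t) (n : ℕ) :
    dyadicDensity n (fun i => (63 / 64) ^ n ≤ √(z n i * t n i)) ≤ (62 / 63) ^ n :=
  calc _ ≤ (𝔼 i ∈ range (2 ^ n), √(z n i * t n i)) / (63 / 64) ^ n :=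
        dyadicDensity_le_expect_div n (fun _ => sqrt_nonneg _) (by positivity)
    _ ≤ (31 / 32) ^ n / (63 / 64) ^ n := by gcongr; exact h.expect_sqrt_mul_le n
    _ = (62 / 63) ^ n := by rw [← div_pow]; norm_num

/-- The three terms bound the failures of the three stages: in the first `m` steps `√(z * t)` decays
geometrically, in the next `q` steps a quarter of squarings makes the smaller of `z` and `t`
superexponentially small in `q`, and `α * r` squarings in the last `r` steps bring it below
`2 ^ (-2 ^ (α * r))`. -/
lemma dyadicDensity_le (h : IsPolarPair z t) {α β : ℝ} (hβ : 0 ≤ β) (hα : α < 1 / 2) {m q r : ℕ}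
    (hq : 0 < q) (hr : 0 < r) (hmq : (63 / 64 : ℝ) ^ m ≤ 2 ^ (-(q + q : ℝ)))
    (hqr : r + 3 ≤ q * (2 : ℝ) ^ ((q : ℝ) / 4)) (hβα : β * (m + q + r : ℕ) ≤ α * r) :
    dyadicDensity (m + q + r) (fun i => polarδ (m + q + r) β ≤ 2 * z (m + q + r) i ∧
      polarδ (m + q + r) β ≤ 2 * t (m + q + r) i) ≤
      (62 / 63) ^ m + 4 / q + 1 / (r * (1 - 2 * α) ^ 2) := by
  have hα' : 0 < 1 - 2 * α := by linarith
  let unpolarized j := (63 / 64 : ℝ) ^ m ≤ √(z m j * t m j)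
  let unbalancedMiddle j := (q / 2 : ℝ) ≤ |2 * (bitCount 1 q j : ℝ) - q|
  let unbalancedEnd j := (1 - 2 * α) * r ≤ |2 * (bitCount 1 r j : ℝ) - r|
  have bad_subset : ∀ i, polarδ (m + q + r) β ≤ 2 * z (m + q + r) i ∧
      polarδ (m + q + r) β ≤ 2 * t (m + q + r) i →
      (unpolarized (i / 2 ^ (q + r)) ∨ unbalancedMiddle (i / 2 ^ r)) ∨ unbalancedEnd i := by
    rintro i ⟨hz, ht⟩
    by_contra! hgood
    obtain ⟨⟨hpolarized, hmiddle⟩, hend⟩ := hgood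
    rw [not_le] at hmiddle hend
    have z_lt := h.left.lt_of_polarδ_le one_lt_two hβ hqr hβα hmiddle hend hz
    have t_lt := h.right.lt_of_polarδ_le two_pos hβ hqr hβα hmiddle hend ht
    refine hpolarized (le_sqrt_of_sq_le ?_)
    rw [sq]
    exact mul_le_mul (hmq.trans z_lt.le) (hmq.trans t_lt.le) (by positivity) (h.left.nonneg _ _)
  have middle_le : dyadicDensity (m + q) unbalancedMiddle ≤ 4 / q :=
    (dyadicDensity_le_abs_two_mul_bitCount_sub m q (by positivity)).trans_eq
      (by field_simp; norm_num)
  have end_le : dyadicDensity (m + q + r) unbalancedEnd ≤ 1 / (r * (1 - 2 * α) ^ 2) :=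
    (dyadicDensity_le_abs_two_mul_bitCount_sub (m + q) r (by positivity)).trans_eq
      (by field_simp)
  calc _ ≤ _ := dyadicDensity_mono _ bad_subset
    _ ≤ _ := (dyadicDensity_or_le _ _ _).trans (add_le_add_left (dyadicDensity_or_le _ _ _) _)
    _ = dyadicDensity m unpolarized + dyadicDensity (m + q) unbalancedMiddle +
          dyadicDensity (m + q + r) unbalancedEnd := by
      rw [dyadicDensity_add (m + q) r unbalancedMiddle, add_assoc m, dyadicDensity_add]
    _ ≤ _ := add_le_add (add_le_add (h.dyadicDensity_pow_le_sqrt_mul_le m) middle_le) end_le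

end IsPolarPair

end SquaringProcesses

section StageLengths

lemma exists_pow_mul_le_two_rpow :
    ∃ D : ℕ, 0 < D ∧ ∀ q : ℕ, (63 / 64 : ℝ) ^ (D * q) ≤ 2 ^ (-(q + q : ℝ)) := by
  obtain ⟨D, hD⟩ := exists_pow_lt_of_lt_one (show (0 : ℝ) < 1 / 4 by norm_num)
    (show (63 / 64 : ℝ) < 1 by norm_num)
  refine ⟨D, Nat.pos_of_ne_zero (by rintro rfl; norm_num at hD), fun q => ?_⟩
  calc (63 / 64 : ℝ) ^ (D * q) ≤ (1 / 4) ^ q := by rw [pow_mul]; gcongr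
    _ = 2 ^ (-(q + q : ℝ)) := by
      rw [rpow_neg zero_le_two, ← Nat.cast_add, rpow_natCast, ← two_mul, pow_mul, ← inv_pow]
      norm_num

lemma exists_mul_le_mul_sub_div {α β : ℝ} (hβ : 0 < β) (hβα : β < α) (D : ℕ) :
    ∃ K : ℕ, 0 < K ∧ ∀ n : ℕ, D * (n / K) ≤ n ∧ β * n ≤ α * (n - D * (n / K) : ℕ) := by
  have hα : 0 < α := hβ.trans hβα
  obtain ⟨K, hK⟩ := exists_nat_gt (α * D / (α - β))
  rw [div_lt_iff₀ (by linarith)] at hK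
  have D_le : D ≤ K := by
    have : α * D ≤ α * K := hK.le.trans (by nlinarith [K.cast_nonneg (α := ℝ)])
    exact_mod_cast le_of_mul_le_mul_left this hα
  have K_pos : 0 < K := Nat.pos_of_ne_zero fun h => by
    rw [h, Nat.cast_zero, zero_mul] at hK
    exact hK.not_ge (by positivity)
  refine ⟨K, K_pos, fun n => ?_⟩
  have div_mul_le : n / K * K ≤ n := Nat.div_mul_le_self n K
  have sub_nonneg : D * (n / K) ≤ n := by nlinarith
  refine ⟨sub_nonneg, ?_⟩
  have div_mul_le' : ((n / K : ℕ) : ℝ) * K ≤ n := mod_cast div_mul_le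
  rw [Nat.cast_sub sub_nonneg, Nat.cast_mul]
  nlinarith [mul_le_mul_of_nonneg_left hK.le (Nat.cast_nonneg (α := ℝ) (n / K))]

lemma eventually_add_three_le_div_mul_rpow {K : ℕ} (hK : 0 < K) :
    ∀ᶠ n : ℕ in atTop, (n + 3 : ℝ) ≤ (n / K : ℕ) * (2 : ℝ) ^ (((n / K : ℕ) : ℝ) / 4) := by
  have tendsto_div : Tendsto (fun n => n / K) atTop atTop := Nat.tendsto_div_const_atTop hK.ne'
  have tendsto_rpow : Tendsto (fun n : ℕ => (2 : ℝ) ^ (((n / K : ℕ) : ℝ) / 4)) atTop atTop :=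
    (tendsto_rpow_atTop_of_base_gt_one 2 one_lt_two).comp
      ((tendsto_natCast_atTop_atTop.comp tendsto_div).atTop_div_const four_pos)
  filter_upwards [tendsto_rpow.eventually_ge_atTop (2 * K + 3),
    tendsto_div.eventually_ge_atTop 1] with n hrpow hdiv
  have one_le : (1 : ℝ) ≤ (n / K : ℕ) := mod_cast hdiv
  have lt_mul_add_one : (n : ℝ) < K * ((n / K : ℕ) + 1) := mod_cast Nat.lt_mul_div_succ n hK
  nlinarith [mul_le_mul_of_nonneg_left hrpow (Nat.cast_nonneg (α := ℝ) (n / K)),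
    mul_le_mul_of_nonneg_left one_le K.cast_nonneg]

lemma exists_stage_lengths {α β : ℝ} (hβ : 0 < β) (hβα : β < α) :
    ∃ m q r : ℕ → ℕ, (∀ n, m n + q n + r n = n) ∧ Tendsto m atTop atTop ∧ Tendsto q atTop atTop ∧
      Tendsto r atTop atTop ∧ (∀ n, (63 / 64 : ℝ) ^ m n ≤ 2 ^ (-(q n + q n : ℝ))) ∧
      (∀ᶠ n in atTop, r n + 3 ≤ q n * (2 : ℝ) ^ ((q n : ℝ) / 4)) ∧ ∀ n, β * n ≤ α * r n := by
  obtain ⟨D, D_pos, pow_le⟩ := exists_pow_mul_le_two_rpow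
  obtain ⟨K, K_pos, hK⟩ := exists_mul_le_mul_sub_div hβ hβα (D + 1)
  have tendsto_q : Tendsto (fun n => n / K) atTop atTop := Nat.tendsto_div_const_atTop K_pos.ne'
  have tendsto_r : Tendsto (fun n => n - (D + 1) * (n / K)) atTop atTop := by
    rw [← tendsto_natCast_atTop_iff (R := ℝ)]
    exact (tendsto_const_mul_atTop_of_pos (hβ.trans hβα)).1
      (tendsto_atTop_mono (fun n => (hK n).2) (tendsto_natCast_atTop_atTop.const_mul_atTop hβ))
  refine ⟨fun n => D * (n / K), fun n => n / K, fun n => n - (D + 1) * (n / K), fun n => ?_,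
    tendsto_q.const_mul_atTop' D_pos, tendsto_q, tendsto_r, fun n => pow_le _, ?_,
    fun n => (hK n).2⟩
  · rw [← Nat.succ_mul, Nat.add_sub_cancel' (hK n).1]
  · filter_upwards [eventually_add_three_le_div_mul_rpow K_pos] with n h
    have sub_le : ((n - (D + 1) * (n / K) : ℕ) : ℝ) ≤ n := mod_cast Nat.sub_le _ _
    linarith

end StageLengths

section Polarization

lemma IsPolarPair.tendsto_dyadicDensity {z t : ℕ → ℕ → ℝ} (h : IsPolarPair z t) {β : ℝ}
    (hβ0 : 0 < β) (hβ : β < 1 / 2) :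
    Tendsto (fun n => dyadicDensity n fun i => polarδ n β ≤ 2 * z n i ∧ polarδ n β ≤ 2 * t n i)
      atTop (nhds 0) := by
  obtain ⟨α, hβα, hα⟩ := exists_between hβ
  have hα' : 0 < 1 - 2 * α := by linarith
  obtain ⟨m, q, r, total, hm, hq, hr, hmq, hqr, hβr⟩ := exists_stage_lengths hβ0 hβα
  have bound_tendsto : Tendsto (fun n => (62 / 63 : ℝ) ^ m n + 4 / q n +
      1 / (r n * (1 - 2 * α) ^ 2)) atTop (nhds 0) := by
    have first := (tendsto_pow_atTop_nhds_zero_of_lt_one (r := (62 / 63 : ℝ)) (by norm_num)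
      (by norm_num)).comp hm
    have middle := (tendsto_natCast_atTop_atTop.comp hq).const_div_atTop (4 : ℝ)
    have last := ((tendsto_natCast_atTop_atTop.comp hr).atTop_mul_const
      (pow_pos hα' 2)).const_div_atTop (1 : ℝ)
    simpa using (first.add middle).add last
  refine squeeze_zero' (Eventually.of_forall fun n => dyadicDensity_nonneg _ _) ?_ bound_tendsto
  filter_upwards [hqr, hq.eventually_gt_atTop 0, hr.eventually_gt_atTop 0] with n hqr hq hr
  have := h.dyadicDensity_le hβ0.le hα hq hr (hmq n) hqr (by rw [total]; exact hβr n)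
  rwa [total] at this

variable {pX : ZMod 2 → ℝ}

lemma isPolarPair_polarLaw (hX : IsPMF pX) :
    IsPolarPair (fun n i => bhattacharyya (polarLaw pX n i))
      (fun n i => bias (polarLaw pX n i)) where
  left.nonneg n i := bhattacharyya_nonneg _
  left.le_sq n i hi := by
    have := (bhattacharyya_polarLaw_odd hX n (i / 2)).le
    rwa [show i / 2 * 2 + 1 = i by omega] at this
  left.le_two_mul_sub_sq n i hi := by
    have := bhattacharyya_polarLaw_even_le hX n (i / 2)
    rwa [show i / 2 * 2 = i by omega] at this
  right.nonneg n i := bias_nonneg _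
  right.le_sq n i hi := by
    have := (bias_polarLaw_even pX n (i / 2)).le
    rwa [show i / 2 * 2 = i by omega] at this
  right.le_two_mul_sub_sq n i hi := by
    have := bias_polarLaw_odd_le hX n (i / 2)
    rwa [show i / 2 * 2 + 1 = i by omega] at this
  sq_add_sq_le_one n i := bhattacharyya_sq_add_bias_sq_le_one (isPMF_polarLaw hX n i)

lemma card_div_le_dyadicDensity {n : ℕ} {s : Finset (Fin (2 ^ n))} {P : ℕ → Prop}
    (h : ∀ i ∈ s, P i) : (#s : ℝ) / (2 ^ n : ℕ) ≤ dyadicDensity n P := by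
  rw [dyadicDensity, expect_eq_sum_div_card, card_range,
    ← Fin.sum_univ_eq_sum_range fun i => if P i then (1 : ℝ) else 0, sum_boole]
  gcongr
  exact fun i hi => mem_filter_univ i |>.2 (h i hi)

lemma tendsto_card_polarH_sdiff_polarV (hX : IsPMF pX) {β : ℝ} (hβ0 : 0 < β) (hβ : β < 1 / 2) :
    Tendsto (fun n : ℕ => ((polarH pX β n \ polarV pX β n).card : ℝ) / (2 ^ n : ℕ)) atTop
      (nhds 0) := by
  refine squeeze_zero (fun n => by positivity) (fun n => card_div_le_dyadicDensity fun i hi => ?_)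
    ((isPolarPair_polarLaw hX).tendsto_dyadicDensity hβ0 hβ)
  obtain ⟨hH, hV⟩ := mem_sdiff.1 hi
  rw [polarH, mem_filter_univ, polarCondH_eq_condEntropy] at hH
  rw [polarV, mem_filter_univ, polarCondH_eq_condEntropy, not_lt] at hV
  have hlaw := isPMF_polarLaw hX n i
  constructor
  · exact hH.le.trans (condEntropy_le_two_mul_bhattacharyya hlaw)
  · linarith [one_sub_condEntropy_le_bias hlaw, bias_nonneg (polarLaw pX n i)]

lemma polarδ_pos (n : ℕ) (β : ℝ) : 0 < polarδ n β := rpow_pos_of_pos two_pos _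

lemma tendsto_polarδ {β : ℝ} (hβ : 0 < β) : Tendsto (fun n => polarδ n β) atTop (nhds 0) := by
  have exponent_tendsto : Tendsto (fun n : ℕ => ((2 : ℝ) ^ n) ^ β) atTop atTop :=
    (tendsto_rpow_atTop hβ).comp (tendsto_pow_atTop_atTop_of_one_lt one_lt_two)
  exact (tendsto_rpow_atBot_of_base_gt_one 2 one_lt_two).comp
    (tendsto_neg_atTop_atBot.comp exponent_tendsto)

lemma sum_sub_le_card_filter_lt {ι : Type*} [Fintype ι] {f : ι → ℝ} {δ : ℝ} (hδ : 0 ≤ δ)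
    (hf : ∀ i, f i ≤ 1) : ∑ i, (f i - δ) ≤ #{i | δ < f i} := by
  rw [← sum_boole]
  exact sum_le_sum fun i _ => by split_ifs <;> linarith [hf i]

lemma card_filter_one_sub_lt_le_sum_add {ι : Type*} [Fintype ι] {f : ι → ℝ} {δ : ℝ} (hδ : 0 ≤ δ)
    (hf : ∀ i, 0 ≤ f i) : (#{i | 1 - δ < f i} : ℝ) ≤ ∑ i, (f i + δ) := by
  rw [← sum_boole]
  exact sum_le_sum fun i _ => by split_ifs <;> linarith [hf i]

lemma sum_polarCondH (hX : IsPMF pX) (n : ℕ) : ∑ i, polarCondH pX n i = 2 ^ n * Hsh pX := by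
  simp only [polarCondH_eq_condEntropy]
  rw [Fin.sum_univ_eq_sum_range fun k => condEntropy (polarLaw pX n k), sum_condEntropy_polarLaw hX]

lemma Hsh_sub_polarδ_le_card_polarH_div (hX : IsPMF pX) (β : ℝ) (n : ℕ) :
    Hsh pX - polarδ n β ≤ ((polarH pX β n).card : ℝ) / (2 ^ n : ℕ) := by
  have condH_le_one : ∀ i, polarCondH pX n i ≤ 1 := fun i => by
    rw [polarCondH_eq_condEntropy]
    exact condEntropy_le_one (isPMF_polarLaw hX n i)
  have count := sum_sub_le_card_filter_lt (polarδ_pos n β).le condH_le_one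
  rw [sum_sub_distrib, sum_polarCondH hX, sum_const, card_univ, Fintype.card_fin, nsmul_eq_mul,
    Nat.cast_pow, Nat.cast_two, ← mul_sub] at count
  rwa [le_div_iff₀' (by positivity), Nat.cast_pow, Nat.cast_two]

lemma card_polarV_div_le_Hsh_add_polarδ (hX : IsPMF pX) (β : ℝ) (n : ℕ) :
    ((polarV pX β n).card : ℝ) / (2 ^ n : ℕ) ≤ Hsh pX + polarδ n β := by
  have condH_nonneg : ∀ i, 0 ≤ polarCondH pX n i := fun i => by
    rw [polarCondH_eq_condEntropy]
    exact condEntropy_nonneg (isPMF_polarLaw hX n i)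
  have count := card_filter_one_sub_lt_le_sum_add (polarδ_pos n β).le condH_nonneg
  rw [sum_add_distrib, sum_polarCondH hX, sum_const, card_univ, Fintype.card_fin, nsmul_eq_mul,
    Nat.cast_pow, Nat.cast_two, ← mul_add] at count
  rwa [div_le_iff₀' (by positivity), Nat.cast_pow, Nat.cast_two]

lemma card_polarH_div_le (pX : ZMod 2 → ℝ) (β : ℝ) (n : ℕ) :
    ((polarH pX β n).card : ℝ) / (2 ^ n : ℕ) ≤ ((polarV pX β n).card : ℝ) / (2 ^ n : ℕ) +
      ((polarH pX β n \ polarV pX β n).card : ℝ) / (2 ^ n : ℕ) := by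
  rw [← add_div]
  gcongr
  rw [add_comm]
  exact mod_cast card_le_card_sdiff_add_card

end Polarization

/-- Lemma 6: asymptotics of the cardinalities of the polarization
sets `H_X` and `V_X`. -/
theorem statement10 (pX : ZMod 2 → ℝ) (hX : IsPMF pX)
    (β : ℝ) (hβ0 : 0 < β) (hβ : β < 1 / 2) :
    Tendsto (fun (n : ℕ) => ((polarH pX β n).card : ℝ) / (2 ^ n : ℕ)) atTop
      (nhds (Hsh pX)) ∧
    Tendsto (fun (n : ℕ) => ((polarV pX β n).card : ℝ) / (2 ^ n : ℕ)) atTop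
      (nhds (Hsh pX)) ∧
    Tendsto (fun (n : ℕ) => (((polarH pX β n) \ (polarV pX β n)).card : ℝ) / (2 ^ n : ℕ))
      atTop (nhds 0) := by
  have gap_tendsto := tendsto_card_polarH_sdiff_polarV hX hβ0 hβ
  have lower_tendsto : Tendsto (fun n => Hsh pX - polarδ n β) atTop (nhds (Hsh pX)) := by
    simpa using (tendsto_polarδ hβ0).const_sub (Hsh pX)
  have upper_tendsto : Tendsto (fun n => Hsh pX + polarδ n β) atTop (nhds (Hsh pX)) := by
    simpa using (tendsto_polarδ hβ0).const_add (Hsh pX)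
  have polarH_upper_tendsto := upper_tendsto.add gap_tendsto
  have polarV_lower_tendsto := lower_tendsto.sub gap_tendsto
  rw [add_zero] at polarH_upper_tendsto
  rw [sub_zero] at polarV_lower_tendsto
  have polarH_lower := Hsh_sub_polarδ_le_card_polarH_div hX β
  have polarV_upper := card_polarV_div_le_Hsh_add_polarδ hX β
  refine ⟨tendsto_of_tendsto_of_tendsto_of_le_of_le lower_tendsto polarH_upper_tendsto
      polarH_lower fun n => ?_,
    tendsto_of_tendsto_of_tendsto_of_le_of_le polarV_lower_tendsto upper_tendsto
      (fun n => ?_) polarV_upper, gap_tendsto⟩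
  · exact (card_polarH_div_le pX β n).trans (add_le_add_left (polarV_upper n) _)
  · exact sub_le_iff_le_add.2 ((polarH_lower n).trans (card_polarH_div_le pX β n))
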